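/- arXiv:1310.3392 — 2 statements merged into one kernel-verified Lean document; each statement's English description precedes it below -/
import Mathlib

section
/- Let B be a real-valued function on the primes with B(p) ∈ [−1,1] for all primes p, and suppose that for every ε with 0 < ε ≤ 1 the set {p prime : 0 ≤ B(p) ≤ ε} has natural density μ_ST([0,ε]). Define b(p) = 2√p·B(p) and c(p) = (1 − b(p))/p. Then the set of primes p for which b(p) and c(p) are NOT of strictly opposite sign (i.e., for which b(p)·c(p) < 0 fails) has natural density 0; equivalently, except for a set of primes of natural density zero, the signs of c(p) and b(p) are exactly opposite. -/
/-!
For a prime `p`, `b p * c p = b p * (1 - b p) / p` is nonnegative exactly when `0 ≤ b p ≤ 1`,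
that is, when `0 ≤ B p ≤ 1 / (2 √p)`. For a fixed `ε` all but finitely many such primes satisfy
`0 ≤ B p ≤ ε`, so the exceptional set has upper density at most `muST 0 ε ≤ ε`. Letting `ε → 0`
gives density zero; the finitely many small primes do not matter because `π(x) → ∞`.
-/

open scoped Classical
open Filter

/-- The prime counting function `π(x)`: the number of primes `≤ x`. -/
noncomputable def primePi (x : ℕ) : ℕ := ((Finset.range (x + 1)).filter Nat.Prime).card

/-- The number of primes `p ≤ x` lying in the set `S`. -/
noncomputable def primeCount (S : Set ℕ) (x : ℕ) : ℕ :=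
  ((Finset.range (x + 1)).filter (fun p => p.Prime ∧ p ∈ S)).card

/-- A set `S` of primes has natural density `δ` if `#{p ∈ S : p ≤ x}/π(x) → δ`. -/
def HasPrimeDensity (S : Set ℕ) (δ : ℝ) : Prop :=
  Filter.Tendsto (fun x : ℕ => (primeCount S x : ℝ) / (primePi x : ℝ)) Filter.atTop (nhds δ)

/-- The Sato–Tate measure of the interval `[a,b]`: `(2/π)∫_a^b √(1-t²) dt`. -/
noncomputable def muST (a b : ℝ) : ℝ := (2 / Real.pi) * ∫ t in a..b, Real.sqrt (1 - t ^ 2)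

lemma tendsto_primePi : Tendsto (fun x => (primePi x : ℝ)) atTop atTop := by
  have h : primePi = Nat.primeCounting := by
    funext x
    simp only [primePi, Nat.primeCounting, Nat.primeCounting', Nat.count_eq_card_filter_range]
  rw [h]
  exact tendsto_natCast_atTop_atTop.comp Nat.tendsto_primeCounting

lemma muST_le {ε : ℝ} (h : 0 < ε) : muST 0 ε ≤ ε := by
  have h1 : ∫ t in (0 : ℝ)..ε, Real.sqrt (1 - t ^ 2) ≤ ∫ _t in (0 : ℝ)..ε, (1 : ℝ) := by
    apply intervalIntegral.integral_mono_on h.le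
    · exact (by fun_prop : Continuous fun t : ℝ => Real.sqrt (1 - t ^ 2)).intervalIntegrable _ _
    · exact intervalIntegrable_const
    · intro t _
      exact Real.sqrt_le_one.mpr (by nlinarith [sq_nonneg t])
  have h2 : 2 / Real.pi ≤ 1 := by
    rw [div_le_one Real.pi_pos]
    exact Real.two_le_pi
  have h3 : ∫ _t in (0 : ℝ)..ε, (1 : ℝ) = ε := by simp
  rw [h3] at h1
  unfold muST
  calc _ ≤ 2 / Real.pi * ε := by gcongr
    _ ≤ 1 * ε := by gcongr
    _ = ε := one_mul _

/-- Enlarging a set of primes beyond `N` loses at most the `N` integers below `N`. -/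
lemma primeCount_le_add {S T : Set ℕ} {N : ℕ} (h : ∀ p, p.Prime → N ≤ p → p ∈ S → p ∈ T) (x : ℕ) :
    primeCount S x ≤ N + primeCount T x := by
  unfold primeCount
  calc _ ≤ (Finset.range N ∪ (Finset.range (x + 1)).filter (fun p => p.Prime ∧ p ∈ T)).card := by
        apply Finset.card_le_card
        intro p hp
        simp only [Finset.mem_filter, Finset.mem_union, Finset.mem_range] at hp ⊢
        rcases lt_or_ge p N with hN | hN
        · exact Or.inl hN
        · exact Or.inr ⟨hp.1, hp.2.1, h p hp.2.1 hN hp.2.2⟩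
    _ ≤ _ := (Finset.card_union_le _ _).trans (by simp)

theorem stmt_2 (B b c : ℕ → ℝ) (hB : ∀ p : ℕ, p.Prime → B p ∈ Set.Icc (-1 : ℝ) 1)
    (hST : ∀ ε : ℝ, 0 < ε → ε ≤ 1 →
      HasPrimeDensity {p | 0 ≤ B p ∧ B p ≤ ε} (muST 0 ε))
    (hb : ∀ p : ℕ, p.Prime → b p = 2 * Real.sqrt p * B p)
    (hc : ∀ p : ℕ, p.Prime → c p = (1 - b p) / p) :
    HasPrimeDensity {p | ¬ b p * c p < 0} 0 := by
  unfold HasPrimeDensity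
  rw [tendsto_order]
  refine ⟨fun a ha => Eventually.of_forall fun x => ha.trans_le (by positivity), fun η hη => ?_⟩
  obtain ⟨ε, hε, hε1, hεη⟩ : ∃ ε : ℝ, 0 < ε ∧ ε ≤ 1 ∧ ε < η :=
    ⟨min 1 (η / 2), by positivity, min_le_left _ _, (min_le_right _ _).trans_lt (by linarith)⟩
  obtain ⟨N, hN⟩ := exists_nat_ge ((1 / ε) ^ 2)
  have key : ∀ p : ℕ, p.Prime → N ≤ p → p ∈ {p | ¬ b p * c p < 0} →
      p ∈ {p | 0 ≤ B p ∧ B p ≤ ε} := by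
    intro p hp hNp hbad
    have hp0 : (0 : ℝ) < p := by exact_mod_cast hp.pos
    have hs : 1 / ε ≤ Real.sqrt p :=
      Real.le_sqrt_of_sq_le (hN.trans (by exact_mod_cast hNp))
    have hs1 : 1 ≤ Real.sqrt p * ε := (div_le_iff₀ hε).mp hs
    have hs0 : 0 < Real.sqrt p := Real.sqrt_pos.mpr hp0
    have hbp := hb p hp
    have hprod : 0 ≤ b p * (1 - b p) := by
      simp only [Set.mem_setOf_eq, not_lt, hc p hp, mul_div_assoc'] at hbad
      by_contra! hneg
      exact absurd hbad (not_le.mpr (div_neg_of_neg_of_pos hneg hp0))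
    have hb0 : 0 ≤ b p := by nlinarith [sq_nonneg (b p)]
    have hb1 : b p ≤ 1 := by nlinarith [sq_nonneg (1 - b p)]
    rw [hbp] at hb0 hb1
    refine ⟨nonneg_of_mul_nonneg_right hb0 (by positivity), ?_⟩
    by_contra! hlt
    nlinarith [mul_lt_mul_of_pos_left hlt hs0]
  have hlim : Tendsto (fun x : ℕ => (N : ℝ) / primePi x +
      (primeCount {p | 0 ≤ B p ∧ B p ≤ ε} x : ℝ) / primePi x) atTop (nhds (0 + muST 0 ε)) :=
    (tendsto_primePi.const_div_atTop _).add (hST ε hε hε1)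
  have hlt : 0 + muST 0 ε < η := by linarith [muST_le hε]
  filter_upwards [hlim.eventually_lt_const hlt] with x hx
  refine lt_of_le_of_lt ?_ hx
  rw [← add_div]
  gcongr
  exact_mod_cast primeCount_le_add key x
end

section
/- Let B₁, B₂ be real-valued functions on the primes with B₁(p), B₂(p) ∈ [−1,1] for all primes p, satisfying the pair Sato-Tate equidistribution hypothesis: for all closed intervals I₁, I₂ ⊆ [−1,1], the set {p prime : B₁(p) ∈ I₁ and B₂(p) ∈ I₂} has natural density μ_ST(I₁)·μ_ST(I₂). Define cᵢ(p) = (1 − 2√p·Bᵢ(p))/p for i = 1,2. Then the set {p prime : c₁(p)·c₂(p) < 0} has natural density 1/2. -/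
/-!
Since `cᵢ(p)` has the sign of `1 / (2√p) - Bᵢ(p)`, and `1 / (2√p) → 0`, for each fixed `ε > 0` all
large primes with `c₁(p) c₂(p) < 0` are squeezed between two pairs of rectangles: they contain
`[ε,1] × [-1,0]` together with its mirror image, and lie in `[0,1] × [-1,ε]` together with its
mirror image. By symmetry each half of the Sato-Tate measure has mass `1/2`, so these pairs have
density `1/2 - μ_ST[0,ε]` and at most `1/2 + μ_ST[0,ε]`. As `μ_ST[0,ε] ≤ ε` (`muST_zero_le`),
letting `ε → 0` gives the density `1/2`.
-/

open scoped Classical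
open Filter

lemma muST_integrable (a b : ℝ) :
    IntervalIntegrable (fun t : ℝ => Real.sqrt (1 - t ^ 2)) MeasureTheory.volume a b :=
  (by fun_prop : Continuous fun t : ℝ => Real.sqrt (1 - t ^ 2)).intervalIntegrable a b

lemma muST_add (a b c : ℝ) : muST a b + muST b c = muST a c := by
  unfold muST
  rw [← mul_add, intervalIntegral.integral_add_adjacent_intervals (muST_integrable a b)
    (muST_integrable b c)]

lemma muST_neg_one_one : muST (-1) 1 = 1 := by
  unfold muST
  rw [integral_sqrt_one_sub_sq]
  field_simp

lemma muST_neg_one_zero_eq : muST (-1) 0 = muST 0 1 := by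
  unfold muST
  have h := intervalIntegral.integral_comp_neg (a := 0) (b := 1)
    (fun t : ℝ => Real.sqrt (1 - t ^ 2))
  simp only [neg_sq, neg_zero] at h
  rw [h]

lemma muST_zero_one : muST 0 1 = 1 / 2 := by
  have h := muST_add (-1) 0 1
  rw [muST_neg_one_one, muST_neg_one_zero_eq] at h
  linarith

lemma muST_neg_one_zero : muST (-1) 0 = 1 / 2 := by
  rw [muST_neg_one_zero_eq, muST_zero_one]

/-- The Sato-Tate density `(2/π)√(1-t²)` is at most `1`. -/
lemma muST_zero_le {e : ℝ} (he : 0 ≤ e) : muST 0 e ≤ e := by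
  unfold muST
  have h : ∫ t in (0 : ℝ)..e, Real.sqrt (1 - t ^ 2) ≤ ∫ _t in (0 : ℝ)..e, (1 : ℝ) := by
    apply intervalIntegral.integral_mono_on he (muST_integrable 0 e) (by simp)
    intro t _
    exact Real.sqrt_le_one.mpr (by nlinarith [sq_nonneg t])
  have h1 : ∫ _t in (0 : ℝ)..e, (1 : ℝ) = e := by simp
  rw [h1] at h
  have hpi : 2 / Real.pi ≤ 1 := by
    rw [div_le_one Real.pi_pos]; exact Real.two_le_pi
  have h0 : 0 ≤ 2 / Real.pi := by positivity
  calc _ ≤ 2 / Real.pi * e := by gcongr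
    _ ≤ 1 * e := by gcongr
    _ = e := one_mul e

lemma primePi_tendsto : Tendsto (fun x : ℕ => (primePi x : ℝ)) atTop atTop := by
  have h : primePi = Nat.primeCounting := by
    funext x
    rw [primePi, Nat.primeCounting, Nat.primeCounting', Nat.count_eq_card_filter_range]
  rw [h]
  exact tendsto_natCast_atTop_atTop.comp Nat.tendsto_primeCounting

lemma primeCount_le_of_subset_union {S A B : Set ℕ} {N : ℕ}
    (h : ∀ p, p.Prime → N ≤ p → p ∈ S → p ∈ A ∨ p ∈ B) (x : ℕ) :
    primeCount S x ≤ primeCount A x + primeCount B x + N := by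
  unfold primeCount
  calc _ ≤ (((Finset.range (x + 1)).filter (fun p => p.Prime ∧ p ∈ A) ∪
        (Finset.range (x + 1)).filter (fun p => p.Prime ∧ p ∈ B)) ∪ Finset.range N).card := by
        apply Finset.card_le_card
        intro p hp
        simp only [Finset.mem_filter, Finset.mem_union, Finset.mem_range] at hp ⊢
        by_cases hN : p < N
        · exact Or.inr hN
        · rcases h p hp.2.1 (not_lt.mp hN) hp.2.2 with hA | hB
          · exact Or.inl (Or.inl ⟨hp.1, hp.2.1, hA⟩)
          · exact Or.inl (Or.inr ⟨hp.1, hp.2.1, hB⟩)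
    _ ≤ _ := by
        refine (Finset.card_union_le _ _).trans ?_
        rw [Finset.card_range]
        gcongr
        exact Finset.card_union_le _ _

lemma primeCount_add_le_of_disjoint {S A B : Set ℕ} {N : ℕ}
    (hAB : ∀ p, p.Prime → p ∈ A → p ∉ B)
    (h : ∀ p, p.Prime → N ≤ p → p ∈ A ∨ p ∈ B → p ∈ S) (x : ℕ) :
    primeCount A x + primeCount B x ≤ primeCount S x + N := by
  unfold primeCount
  rw [← Finset.card_union_of_disjoint]
  · calc _ ≤ ((Finset.range (x + 1)).filter (fun p => p.Prime ∧ p ∈ S) ∪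
          Finset.range N).card := by
          apply Finset.card_le_card
          intro p hp
          simp only [Finset.mem_filter, Finset.mem_union, Finset.mem_range] at hp ⊢
          by_cases hN : p < N
          · exact Or.inr hN
          · left
            rcases hp with hp | hp
            · exact ⟨hp.1, hp.2.1, h p hp.2.1 (not_lt.mp hN) (Or.inl hp.2.2)⟩
            · exact ⟨hp.1, hp.2.1, h p hp.2.1 (not_lt.mp hN) (Or.inr hp.2.2)⟩
      _ ≤ _ := by
          refine (Finset.card_union_le _ _).trans ?_
          rw [Finset.card_range]
  · rw [Finset.disjoint_left]
    intro p hp hq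
    simp only [Finset.mem_filter] at hp hq
    exact hAB p hp.2.1 hp.2.2 hq.2.2

/-- The exponent `c = (1 - 2√p·B)/p` changes sign at `B = 1/(2√p)`, and the hypothesis on `e` says
that this threshold lies in `(0, e)`. The sign of `c` is therefore determined by `B` outside that
interval. -/
lemma coeff_sign {p : ℕ} (hp : p.Prime) {B c e : ℝ} (hc : c = (1 - 2 * Real.sqrt p * B) / p)
    (he : 1 < 2 * Real.sqrt p * e) :
    (c < 0 → 0 ≤ B) ∧ (0 < c → B ≤ e) ∧ (e ≤ B → c < 0) ∧ (B ≤ 0 → 0 < c) := by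
  have hp0 : (0 : ℝ) < p := by exact_mod_cast hp.pos
  have hs : 0 < Real.sqrt p := Real.sqrt_pos.mpr hp0
  have hneg : e ≤ B → c < 0 := by
    intro h
    rw [hc]
    apply div_neg_of_neg_of_pos _ hp0
    have : 2 * Real.sqrt p * e ≤ 2 * Real.sqrt p * B := by gcongr
    linarith
  have hpos : B ≤ 0 → 0 < c := by
    intro h
    rw [hc]
    apply div_pos _ hp0
    nlinarith
  refine ⟨fun h => ?_, fun h => ?_, hneg, hpos⟩
  · by_contra hB
    linarith [hpos (not_le.mp hB).le]
  · by_contra hB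
    linarith [hneg (not_le.mp hB).le]

lemma exists_threshold {e : ℝ} (he : 0 < e) :
    ∃ N : ℕ, ∀ p : ℕ, N ≤ p → 1 < 2 * Real.sqrt p * e := by
  have h : Tendsto (fun p : ℕ => 2 * Real.sqrt p * e) atTop atTop :=
    ((Real.tendsto_sqrt_atTop.comp tendsto_natCast_atTop_atTop).const_mul_atTop
      two_pos).atTop_mul_const he
  exact eventually_atTop.mp (h.eventually_gt_atTop 1)

theorem stmt_3 (B₁ B₂ c₁ c₂ : ℕ → ℝ)
    (hB₁ : ∀ p : ℕ, p.Prime → B₁ p ∈ Set.Icc (-1 : ℝ) 1)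
    (hB₂ : ∀ p : ℕ, p.Prime → B₂ p ∈ Set.Icc (-1 : ℝ) 1)
    (hST : ∀ a₁ b₁ a₂ b₂ : ℝ, -1 ≤ a₁ → a₁ ≤ b₁ → b₁ ≤ 1 → -1 ≤ a₂ → a₂ ≤ b₂ → b₂ ≤ 1 →
      HasPrimeDensity {p | B₁ p ∈ Set.Icc a₁ b₁ ∧ B₂ p ∈ Set.Icc a₂ b₂}
        (muST a₁ b₁ * muST a₂ b₂))
    (hc₁ : ∀ p : ℕ, p.Prime → c₁ p = (1 - 2 * Real.sqrt p * B₁ p) / p)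
    (hc₂ : ∀ p : ℕ, p.Prime → c₂ p = (1 - 2 * Real.sqrt p * B₂ p) / p) :
    HasPrimeDensity {p | c₁ p * c₂ p < 0} (1 / 2) := by
  have hN0 (N : ℕ) : Tendsto (fun x : ℕ => (N : ℝ) / (primePi x : ℝ)) atTop (nhds 0) :=
    primePi_tendsto.const_div_atTop (N : ℝ)
  unfold HasPrimeDensity
  rw [tendsto_order]
  constructor
  · intro a ha
    obtain ⟨e, he0, he1, hea⟩ : ∃ e : ℝ, 0 < e ∧ e ≤ 1 ∧ a < 1 / 2 - e :=
      ⟨min 1 ((1 / 2 - a) / 2), lt_min one_pos (by linarith), min_le_left _ _, by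
        linarith [min_le_right 1 ((1 / 2 - a) / 2)]⟩
    obtain ⟨N, hN⟩ := exists_threshold he0
    have hA := hST e 1 (-1) 0 (by linarith) he1 le_rfl le_rfl (by norm_num) (by norm_num)
    have hB := hST (-1) 0 e 1 le_rfl (by norm_num) (by norm_num) (by linarith) he1 le_rfl
    have hlim := (hA.add hB).sub (hN0 N)
    have hval : a < muST e 1 * muST (-1) 0 + muST (-1) 0 * muST e 1 - 0 := by
      have h1 := muST_add 0 e 1
      rw [muST_zero_one] at h1
      rw [muST_neg_one_zero]
      linarith [muST_zero_le he0.le]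
    filter_upwards [hlim.eventually_const_lt hval] with x hx
    refine hx.trans_le ?_
    -- the rectangles `[e,1] × [-1,0]` and `[-1,0] × [e,1]` are disjoint and force opposite signs
    rw [← add_div, ← sub_div]
    gcongr
    rw [sub_le_iff_le_add]
    norm_cast
    apply primeCount_add_le_of_disjoint
    · rintro p _ ⟨h1, _⟩ ⟨h2, _⟩
      linarith [h1.1, h2.2]
    · intro p hp hNp h
      have s1 := coeff_sign hp (hc₁ p hp) (hN p hNp)
      have s2 := coeff_sign hp (hc₂ p hp) (hN p hNp)
      rcases h with ⟨h1, h2⟩ | ⟨h1, h2⟩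
      · exact mul_neg_of_neg_of_pos (s1.2.2.1 h1.1) (s2.2.2.2 h2.2)
      · exact mul_neg_of_pos_of_neg (s1.2.2.2 h1.2) (s2.2.2.1 h2.1)
  · intro a ha
    obtain ⟨e, he0, he1, hea⟩ : ∃ e : ℝ, 0 < e ∧ e ≤ 1 ∧ 1 / 2 + e < a :=
      ⟨min 1 ((a - 1 / 2) / 2), lt_min one_pos (by linarith), min_le_left _ _, by
        linarith [min_le_right 1 ((a - 1 / 2) / 2)]⟩
    obtain ⟨N, hN⟩ := exists_threshold he0
    have hA := hST 0 1 (-1) e (by norm_num) (by norm_num) le_rfl le_rfl (by linarith) he1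
    have hB := hST (-1) e 0 1 le_rfl (by linarith) he1 (by norm_num) (by norm_num) le_rfl
    have hlim := (hA.add hB).add (hN0 N)
    have hval : muST 0 1 * muST (-1) e + muST (-1) e * muST 0 1 + 0 < a := by
      have h1 := muST_add (-1) 0 e
      rw [muST_neg_one_zero] at h1
      rw [muST_zero_one]
      linarith [muST_zero_le he0.le]
    filter_upwards [hlim.eventually_lt_const hval] with x hx
    refine lt_of_le_of_lt ?_ hx
    -- opposite signs force a point of `[0,1] × [-1,e]` or `[-1,e] × [0,1]`
    rw [← add_div, ← add_div]
    gcongr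
    rw [← Nat.cast_add, ← Nat.cast_add, Nat.cast_le]
    apply primeCount_le_of_subset_union
    intro p hp hNp h
    have s1 := coeff_sign hp (hc₁ p hp) (hN p hNp)
    have s2 := coeff_sign hp (hc₂ p hp) (hN p hNp)
    rcases mul_neg_iff.mp (show c₁ p * c₂ p < 0 from h) with ⟨h1, h2⟩ | ⟨h1, h2⟩
    · exact Or.inr ⟨⟨(hB₁ p hp).1, s1.2.1 h1⟩, ⟨s2.1 h2, (hB₂ p hp).2⟩⟩
    · exact Or.inl ⟨⟨s1.1 h1, (hB₁ p hp).2⟩, ⟨(hB₂ p hp).1, s2.2.1 h2⟩⟩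
end
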